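/- Let ψ be a Cartan–Hadamard model function with ∫₀^∞ Θ(s)^{1/(p−1)} ds = +∞ and such that either (a) there exist γ ∈ [0,1) and ℓ ∈ (0,∞) with lim_{r→∞} r^γ·ψ′(r)/ψ(r) = ℓ, or (b) lim_{r→∞} ψ′(r)/ψ(r) = +∞ and lim_{r→∞} (ψ(r)/ψ′(r))·(d/dr) log(ψ′(r)/ψ(r)) = 0. Let u be a global radial solution. Then lim_{r→∞} (∫₀ʳ Θ(s)^{1/(p−1)} ds)^{(p−1)/(q+1−p)} · u(r) = ((p−1)/(q+1−p))^{(p−1)/(q+1−p)}. -/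

import Mathlib

open Real Filter MeasureTheory
open scoped ENNReal Topology

/-- The volume-to-surface ratio `Θ(r) = (∫₀ʳ ψ(s)^{n-1} ds) / ψ(r)^{n-1}`. -/
noncomputable def Theta (n : ℕ) (ψ : ℝ → ℝ) (r : ℝ) : ℝ :=
  (∫ s in (0:ℝ)..r, ψ s ^ (n - 1)) / ψ r ^ (n - 1)

/-- A Cartan–Hadamard model function: smooth, `ψ(0)=0`, `ψ'(0)=1`, convex on `[0,∞)`,
positive on `(0,∞)`. -/
def IsCHModel (ψ : ℝ → ℝ) : Prop :=
  ContDiff ℝ (⊤ : ℕ∞) ψ ∧ ψ 0 = 0 ∧ deriv ψ 0 = 1 ∧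
    (∀ r : ℝ, 0 ≤ r → 0 ≤ deriv (deriv ψ) r) ∧ (∀ r : ℝ, 0 < r → 0 < ψ r)

/-- A radial solution on `[0,T)` (with `T ∈ (0,∞]`) with initial datum `α`:
`u ∈ C¹([0,T))`, `u(0)=α`, `u'(0)=0`, `u>0` on `[0,T)`, and
`(ψ^{n-1} |u'|^{p-2} u')' = -ψ^{n-1} u^q` on `(0,T)`. -/
structure IsRadialSolution (n : ℕ) (p q : ℝ) (ψ : ℝ → ℝ) (T : ℝ≥0∞) (α : ℝ)
    (u : ℝ → ℝ) : Prop where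
  init : u 0 = α
  deriv_init : deriv u 0 = 0
  pos : ∀ r : ℝ, 0 ≤ r → ENNReal.ofReal r < T → 0 < u r
  diff : ∀ r : ℝ, 0 ≤ r → ENNReal.ofReal r < T → DifferentiableAt ℝ u r
  deriv_cont : ContinuousOn (deriv u) {r : ℝ | 0 ≤ r ∧ ENNReal.ofReal r < T}
  eqn : ∀ r : ℝ, 0 < r → ENNReal.ofReal r < T →
    HasDerivAt (fun s => ψ s ^ (n - 1) * |deriv u s| ^ (p - 2) * deriv u s)
      (-(ψ r ^ (n - 1) * u r ^ q)) r

/-- The energy function `F_u(r) = ((p-1)/p)|u'(r)|^p + u(r)^{q+1}/(q+1)`. -/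
noncomputable def energyF (p q : ℝ) (u : ℝ → ℝ) (r : ℝ) : ℝ :=
  (p - 1) / p * |deriv u r| ^ p + u r ^ (q + 1) / (q + 1)

/-- The Pohozaev function
`P_u(r) = (∫₀ʳ ψ^{n-1}) F_u(r) + (ψ(r)^{n-1}/(q+1)) |u'(r)|^{p-2} u'(r) u(r)`. -/
noncomputable def pohozaevP (n : ℕ) (p q : ℝ) (ψ u : ℝ → ℝ) (r : ℝ) : ℝ :=
  (∫ s in (0:ℝ)..r, ψ s ^ (n - 1)) * energyF p q u r +
    ψ r ^ (n - 1) / (q + 1) * (|deriv u r| ^ (p - 2) * deriv u r * u r)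

/-- `K(r) = ((p-1)/p + 1/(q+1)) ψ(r)^{n-1} - (n-1)(ψ'(r)/ψ(r)) ∫₀ʳ ψ^{n-1}`. -/
noncomputable def Kfun (n : ℕ) (p q : ℝ) (ψ : ℝ → ℝ) (r : ℝ) : ℝ :=
  ((p - 1) / p + 1 / (q + 1)) * ψ r ^ (n - 1) -
    ((n : ℝ) - 1) * (deriv ψ r / ψ r) * ∫ s in (0:ℝ)..r, ψ s ^ (n - 1)

/-- Condition (a): `r^γ ψ'(r)/ψ(r) → ℓ ∈ (0,∞)` for some `γ ∈ [0,1)`. -/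
def CondA (ψ : ℝ → ℝ) : Prop :=
  ∃ γ ℓ : ℝ, 0 ≤ γ ∧ γ < 1 ∧ 0 < ℓ ∧
    Tendsto (fun r : ℝ => r ^ γ * deriv ψ r / ψ r) atTop (nhds ℓ)

/-- Condition (b): `ψ'/ψ → +∞` and `(ψ/ψ') (log(ψ'/ψ))' → 0`. -/
def CondB (ψ : ℝ → ℝ) : Prop :=
  Tendsto (fun r : ℝ => deriv ψ r / ψ r) atTop atTop ∧
    Tendsto (fun r : ℝ => ψ r / deriv ψ r *
      deriv (fun s : ℝ => Real.log (deriv ψ s / ψ s)) r) atTop (nhds 0)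

theorem eventually_le_mul_of_deriv_le {f g f' g' : ℝ → ℝ} {κ κ' : ℝ}
    (hf : ∀ᶠ r in atTop, HasDerivAt f (f' r) r) (hg : ∀ᶠ r in atTop, HasDerivAt g (g' r) r)
    (hle : ∀ᶠ r in atTop, f' r ≤ κ * g' r) (hlim : Tendsto g atTop atTop) (hκ : κ < κ') :
    ∀ᶠ r in atTop, f r ≤ κ' * g r := by
  obtain ⟨a, ha⟩ := eventually_atTop.1 (hf.and (hg.and hle))
  have hd : ∀ r, a ≤ r → HasDerivAt (fun s => f s - κ * g s) (f' r - κ * g' r) r :=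
    fun r hr => (ha r hr).1.sub ((ha r hr).2.1.const_mul κ)
  have hanti : AntitoneOn (fun s => f s - κ * g s) (Set.Ici a) := by
    refine antitoneOn_of_deriv_nonpos (convex_Ici a)
      (fun r hr => (hd r hr).continuousAt.continuousWithinAt) ?_ ?_
    · intro r hr
      rw [interior_Ici] at hr
      exact (hd r (le_of_lt hr)).differentiableAt.differentiableWithinAt
    · intro r hr
      rw [interior_Ici] at hr
      rw [(hd r (le_of_lt hr)).deriv]
      linarith [(ha r (le_of_lt hr)).2.2]
  have hbig : ∀ᶠ r in atTop, (f a - κ * g a) / (κ' - κ) ≤ g r := hlim.eventually_ge_atTop _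
  filter_upwards [hbig, eventually_ge_atTop a] with r hr har
  have h1 : f r - κ * g r ≤ f a - κ * g a := hanti (Set.self_mem_Ici) har har
  rw [div_le_iff₀ (by linarith)] at hr
  nlinarith

/-- If `f` decreases at a rate comparable to the growth of `g → ∞` whenever `f ≥ η`, then
`f` is eventually at most `η`. -/
theorem eventually_le_of_deriv_le_neg {f g f' g' : ℝ → ℝ} {η κ : ℝ}
    (hf : ∀ᶠ r in atTop, HasDerivAt f (f' r) r) (hg : ∀ᶠ r in atTop, HasDerivAt g (g' r) r)
    (hg' : ∀ᶠ r in atTop, 0 < g' r) (hlim : Tendsto g atTop atTop) (hκ : 0 < κ)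
    (hle : ∀ᶠ r in atTop, η ≤ f r → f' r ≤ -κ * g' r) :
    ∀ᶠ r in atTop, f r ≤ η := by
  have hfreq : ∃ᶠ r in atTop, f r < η := by
    intro hcon
    have hge : ∀ᶠ r in atTop, η ≤ f r := hcon.mono fun r hr => not_lt.1 hr
    have h1 := eventually_le_mul_of_deriv_le (κ := -κ) (κ' := -κ / 2) hf hg
      ((hle.and hge).mono fun r hr => hr.1 hr.2) hlim (by linarith)
    have h2 : ∀ᶠ r in atTop, -2 * η / κ + 1 ≤ g r := hlim.eventually_ge_atTop _
    obtain ⟨r, h3, h4, h5⟩ := (h1.and (h2.and hge)).exists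
    have h6 : κ * (-2 * η / κ + 1) ≤ κ * g r := by gcongr
    have h7 : κ * (-2 * η / κ + 1) = -2 * η + κ := by field_simp
    linarith
  obtain ⟨a, ha⟩ := eventually_atTop.1 (hf.and (hg'.and hle))
  obtain ⟨b, hbη, hab⟩ := (hfreq.and_eventually (eventually_ge_atTop a)).exists
  filter_upwards [eventually_ge_atTop b] with r hr
  refine image_le_of_deriv_right_lt_deriv_boundary (f := f) (f' := f') (a := b) (b := r)
    (B := fun _ => η) (B' := fun _ => 0) ?_ ?_ hbη.le ?_ ?_ ⟨hr, le_rfl⟩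
  · exact fun x hx => (ha x (hab.trans hx.1)).1.continuousAt.continuousWithinAt
  · exact fun x hx => (ha x (hab.trans hx.1)).1.hasDerivWithinAt
  · exact fun x => hasDerivAt_const x η
  · intro x hx hxη
    obtain ⟨_, h2, h3⟩ := ha x (hab.trans hx.1)
    have := h3 hxη.ge
    have := mul_pos hκ h2
    linarith

theorem nonneg_of_deriv_nonneg {f f' : ℝ → ℝ} (hc : ContinuousOn f (Set.Ici 0)) (h0 : f 0 = 0)
    (hf : ∀ r, 0 < r → HasDerivAt f (f' r) r) (hf' : ∀ r, 0 < r → 0 ≤ f' r) {r : ℝ}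
    (hr : 0 ≤ r) : 0 ≤ f r := by
  have hm : MonotoneOn f (Set.Ici 0) := by
    refine monotoneOn_of_deriv_nonneg (convex_Ici 0) hc ?_ ?_
    · intro x hx
      rw [interior_Ici] at hx
      exact (hf x hx).differentiableAt.differentiableWithinAt
    · intro x hx
      rw [interior_Ici] at hx
      rw [(hf x hx).deriv]
      exact hf' x hx
  exact h0 ▸ hm Set.self_mem_Ici hr hr

/-- Positive functions `A`, `V`, `u`, `w` on `(0, ∞)` with `V' = A`, `A' = m A`, `u' = -w` and
`(A w ^ (p - 1))' = A u ^ q`. -/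
structure IsFluxSystem (p q : ℝ) (A V m u w : ℝ → ℝ) : Prop where
  A_pos : ∀ r, 0 < r → 0 < A r
  V_pos : ∀ r, 0 < r → 0 < V r
  u_pos : ∀ r, 0 < r → 0 < u r
  w_pos : ∀ r, 0 < r → 0 < w r
  hasDerivAt_V : ∀ r, 0 < r → HasDerivAt V (A r) r
  hasDerivAt_A : ∀ r, 0 < r → HasDerivAt A (m r * A r) r
  hasDerivAt_u : ∀ r, 0 < r → HasDerivAt u (-w r) r
  hasDerivAt_flux : ∀ r, 0 < r →
    HasDerivAt (fun s => A s * w s ^ (p - 1)) (A r * u r ^ q) r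

namespace IsFluxSystem

variable {p q : ℝ} {A V m u w : ℝ → ℝ}

theorem hasDerivAt_w (h : IsFluxSystem p q A V m u w) (hp : 1 < p) {r : ℝ} (hr : 0 < r) :
    HasDerivAt w (w r / (p - 1) * (u r ^ q / w r ^ (p - 1) - m r)) r := by
  have hA := h.A_pos r hr
  have hw := h.w_pos r hr
  have hwp : 0 < w r ^ (p - 1) := rpow_pos_of_pos hw _
  have hp' : p - 1 ≠ 0 := by linarith
  have h1 := ((h.hasDerivAt_flux r hr).div (h.hasDerivAt_A r hr) hA.ne').rpow_const
    (p := 1 / (p - 1)) (Or.inl (by simp only [Pi.div_apply]; positivity))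
  have heq : (fun s => ((fun s => A s * w s ^ (p - 1)) / A) s ^ (1 / (p - 1))) =ᶠ[𝓝 r] w := by
    filter_upwards [eventually_gt_nhds hr] with s hs
    have hAs := h.A_pos s hs
    simp only [Pi.div_apply]
    rw [mul_div_cancel_left₀ _ hAs.ne', ← rpow_mul (h.w_pos s hs).le, mul_one_div_cancel hp',
      rpow_one]
  refine (h1.congr_of_eventuallyEq heq.symm).congr_deriv ?_
  simp only [Pi.div_apply]
  rw [mul_div_cancel_left₀ _ hA.ne', ← rpow_mul hw.le,
    show (p - 1) * (1 / (p - 1) - 1) = 1 - (p - 1) by field_simp, rpow_sub hw 1 (p - 1), rpow_one]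
  generalize w r ^ (p - 1) = z at hwp
  field_simp

theorem hasDerivAt_ratio (h : IsFluxSystem p q A V m u w) (hp : 1 < p) {r : ℝ} (hr : 0 < r) :
    HasDerivAt (fun s => V s * w s / (A s * u s))
      (A r / V r * (V r * w r / (A r * u r)) *
        (1 - m r * V r / A r + 1 / (p - 1) * (V r * u r ^ q / (A r * w r ^ (p - 1)) -
          m r * V r / A r) + V r * w r / (A r * u r))) r := by
  have hA := h.A_pos r hr
  have hw := h.w_pos r hr
  have hV := h.V_pos r hr
  have hu := h.u_pos r hr
  have hwp : 0 < w r ^ (p - 1) := rpow_pos_of_pos hw _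
  have hp' : p - 1 ≠ 0 := by linarith
  refine (((h.hasDerivAt_V r hr).mul (h.hasDerivAt_w hp hr)).div
    ((h.hasDerivAt_A r hr).mul (h.hasDerivAt_u r hr)) (mul_pos hA hu).ne').congr_deriv ?_
  simp only [Pi.mul_apply]
  field_simp
  ring

theorem hasDerivAt_fluxRatio (h : IsFluxSystem p q A V m u w) {r : ℝ} (hr : 0 < r) :
    HasDerivAt (fun s => A s * w s ^ (p - 1) / (V s * u s ^ q))
      (A r / V r * (A r * w r ^ (p - 1) / (V r * u r ^ q)) *
        ((A r * w r ^ (p - 1) / (V r * u r ^ q))⁻¹ - 1 + q * (V r * w r / (A r * u r)))) r := by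
  have hA := h.A_pos r hr
  have hw := h.w_pos r hr
  have hV := h.V_pos r hr
  have hu := h.u_pos r hr
  have hwp : 0 < w r ^ (p - 1) := rpow_pos_of_pos hw _
  have huq : 0 < u r ^ q := rpow_pos_of_pos hu _
  refine ((h.hasDerivAt_flux r hr).div ((h.hasDerivAt_V r hr).mul
    ((h.hasDerivAt_u r hr).rpow_const (p := q) (Or.inl hu.ne')))
    (mul_pos hV huq).ne').congr_deriv ?_
  simp only [Pi.mul_apply]
  rw [rpow_sub hu, rpow_one]
  field_simp
  ring

theorem hasDerivAt_theta (h : IsFluxSystem p q A V m u w) {r : ℝ} (hr : 0 < r) :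
    HasDerivAt (fun s => V s / A s) (1 - m r * V r / A r) r := by
  have hA := h.A_pos r hr
  refine ((h.hasDerivAt_V r hr).div (h.hasDerivAt_A r hr) hA.ne').congr_deriv ?_
  field_simp

theorem hasDerivAt_pohozaev (h : IsFluxSystem p q A V m u w) (hp : 1 < p) (hq : 0 < q)
    {r : ℝ} (hr : 0 < r) :
    HasDerivAt (fun s => A s * w s ^ (p - 1) * u s / (q + 1) -
        V s * ((p - 1) / p * w s ^ p + u s ^ (q + 1) / (q + 1)))
      (w r ^ p * (m r * V r - ((p - 1) / p + 1 / (q + 1)) * A r)) r := by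
  have hA := h.A_pos r hr
  have hw := h.w_pos r hr
  have hV := h.V_pos r hr
  have hu := h.u_pos r hr
  have hwp : 0 < w r ^ (p - 1) := rpow_pos_of_pos hw _
  have hp' : p - 1 ≠ 0 := by linarith
  have hq' : q + 1 ≠ 0 := by linarith
  refine ((((h.hasDerivAt_flux r hr).mul (h.hasDerivAt_u r hr)).div_const (q + 1)).sub
    ((h.hasDerivAt_V r hr).mul
      ((((h.hasDerivAt_w hp hr).rpow_const (p := p) (Or.inl hw.ne')).const_mul ((p - 1) / p)).add
      (((h.hasDerivAt_u r hr).rpow_const (p := q + 1) (Or.inl hu.ne')).div_const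
        (q + 1))))).congr_deriv ?_
  simp only [Pi.add_apply]
  have e1 : w r ^ p = w r ^ (p - 1) * w r := by
    rw [← rpow_add_one hw.ne']; ring_nf
  rw [e1, rpow_add_one hu.ne', add_sub_cancel_right]
  field_simp
  ring

theorem hasDerivAt_rpow_neg (h : IsFluxSystem p q A V m u w) (c : ℝ) {r : ℝ} (hr : 0 < r) :
    HasDerivAt (fun s => u s ^ (-c)) (c * (w r * u r ^ (-c - 1))) r :=
  ((h.hasDerivAt_u r hr).rpow_const (p := -c) (Or.inl (h.u_pos r hr).ne')).congr_deriv (by ring)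

theorem mul_rpow_eq (h : IsFluxSystem p q A V m u w) (hp : 1 < p) {r : ℝ} (hr : 0 < r) :
    w r * u r ^ (-((q + 1 - p) / (p - 1)) - 1) =
      (A r * w r ^ (p - 1) / (V r * u r ^ q)) ^ (1 / (p - 1)) * (V r / A r) ^ (1 / (p - 1)) := by
  have hA := h.A_pos r hr
  have hw := h.w_pos r hr
  have hV := h.V_pos r hr
  have hu := h.u_pos r hr
  have hp' : p - 1 ≠ 0 := by linarith
  have huq : 0 < u r ^ q := rpow_pos_of_pos hu _
  have hwp : 0 < w r ^ (p - 1) := rpow_pos_of_pos hw _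
  rw [← mul_rpow (by positivity) (by positivity),
    show A r * w r ^ (p - 1) / (V r * u r ^ q) * (V r / A r) = w r ^ (p - 1) / u r ^ q by
      generalize w r ^ (p - 1) = z
      field_simp,
    div_rpow hwp.le huq.le, ← rpow_mul hw.le, mul_one_div_cancel hp', rpow_one,
    ← rpow_mul hu.le, div_eq_mul_inv (w r), ← rpow_neg hu.le]
  congr 2
  field_simp
  ring

theorem eventually_theta_rpow_le (h : IsFluxSystem p q A V m u w) (hp : 1 < p) {H : ℝ → ℝ}
    (hH : ∀ᶠ r in atTop, HasDerivAt H ((V r / A r) ^ (1 / (p - 1))) r)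
    (hHlim : Tendsto H atTop atTop)
    (ha : ∀ ε > 0, ∀ᶠ r in atTop, 1 - ε ≤ m r * V r / A r) {ε : ℝ} (hε : 0 < ε) :
    ∀ᶠ r in atTop, (V r / A r) ^ (p / (p - 1)) ≤ ε * H r := by
  have hp' : 0 < p - 1 := by linarith
  refine eventually_le_mul_of_deriv_le (κ := ε / 2) (f' := fun r =>
    (1 - m r * V r / A r) * (p / (p - 1)) * (V r / A r) ^ (p / (p - 1) - 1)) ?_ hH ?_ hHlim
    (by linarith)
  · filter_upwards [eventually_gt_atTop 0] with r hr
    exact (h.hasDerivAt_theta hr).rpow_const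
      (Or.inl (div_pos (h.V_pos r hr) (h.A_pos r hr)).ne')
  · filter_upwards [eventually_gt_atTop 0, ha (ε / 2 * ((p - 1) / p)) (by positivity)] with r hr h1
    rw [show p / (p - 1) - 1 = 1 / (p - 1) by field_simp; ring]
    have h2 : 0 < V r / A r := div_pos (h.V_pos r hr) (h.A_pos r hr)
    gcongr
    calc (1 - m r * V r / A r) * (p / (p - 1)) ≤ (ε / 2 * ((p - 1) / p)) * (p / (p - 1)) := by
          gcongr; linarith
      _ = ε / 2 := by field_simp

theorem one_le_fluxRatio (h : IsFluxSystem p q A V m u w)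
    (hR : ∀ r, 0 < r → V r * u r ^ q ≤ A r * w r ^ (p - 1)) {r : ℝ} (hr : 0 < r) :
    1 ≤ A r * w r ^ (p - 1) / (V r * u r ^ q) := by
  rw [one_le_div (mul_pos (h.V_pos r hr) (rpow_pos_of_pos (h.u_pos r hr) _))]
  exact hR r hr

theorem eventually_mul_le_rpow_neg (h : IsFluxSystem p q A V m u w) (hp : 1 < p)
    (hqp : p < q + 1) {H : ℝ → ℝ}
    (hH : ∀ᶠ r in atTop, HasDerivAt H ((V r / A r) ^ (1 / (p - 1))) r)
    (hHlim : Tendsto H atTop atTop)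
    (hR : ∀ r, 0 < r → V r * u r ^ q ≤ A r * w r ^ (p - 1)) {c' : ℝ}
    (hc' : c' < (q + 1 - p) / (p - 1)) :
    ∀ᶠ r in atTop, c' * H r ≤ u r ^ (-((q + 1 - p) / (p - 1))) := by
  have hc : 0 < (q + 1 - p) / (p - 1) := div_pos (by linarith) (by linarith)
  have hp' : 0 < p - 1 := by linarith
  set c := (q + 1 - p) / (p - 1) with hcdef
  have := eventually_le_mul_of_deriv_le (κ := -c) (κ' := -c') (f := fun s => -u s ^ (-c))
    (f' := fun r => -(c * (w r * u r ^ (-c - 1)))) (g := H) ?_ hH ?_ hHlim (by linarith)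
  · filter_upwards [this] with r hr
    linarith
  · filter_upwards [eventually_gt_atTop 0] with r hr
    exact (h.hasDerivAt_rpow_neg c hr).neg
  · filter_upwards [eventually_gt_atTop 0] with r hr
    rw [h.mul_rpow_eq hp hr, neg_mul, neg_le_neg_iff]
    have h2 : 0 < V r / A r := div_pos (h.V_pos r hr) (h.A_pos r hr)
    gcongr
    exact le_mul_of_one_le_left (by positivity)
      (one_le_rpow (h.one_le_fluxRatio hR hr) (by positivity))

theorem eventually_theta_mul_le (h : IsFluxSystem p q A V m u w) (hp : 1 < p)
    (hqp : p < q + 1) {H : ℝ → ℝ}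
    (hH : ∀ᶠ r in atTop, HasDerivAt H ((V r / A r) ^ (1 / (p - 1))) r)
    (hHlim : Tendsto H atTop atTop)
    (ha : ∀ ε > 0, ∀ᶠ r in atTop, 1 - ε ≤ m r * V r / A r)
    (hR : ∀ r, 0 < r → V r * u r ^ q ≤ A r * w r ^ (p - 1)) {ε : ℝ} (hε : 0 < ε) :
    ∀ᶠ r in atTop, (V r / A r) ^ p * u r ^ (q + 1 - p) ≤ ε := by
  have hp' : 0 < p - 1 := by linarith
  have hc : 0 < (q + 1 - p) / (p - 1) := div_pos (by linarith) hp'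
  set c := (q + 1 - p) / (p - 1) with hcdef
  have hε' : 0 < ε ^ (1 / (p - 1)) := rpow_pos_of_pos hε _
  filter_upwards [eventually_gt_atTop 0,
    h.eventually_theta_rpow_le hp hH hHlim ha (ε := ε ^ (1 / (p - 1)) * (c / 2)) (by positivity),
    h.eventually_mul_le_rpow_neg hp hqp hH hHlim hR (c' := c / 2) (by linarith)] with r hr h1 h2
  have hu := h.u_pos r hr
  have hΘ : 0 < V r / A r := div_pos (h.V_pos r hr) (h.A_pos r hr)
  have h3 : (V r / A r) ^ (p / (p - 1)) * u r ^ c ≤ ε ^ (1 / (p - 1)) := by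
    have h4 : (V r / A r) ^ (p / (p - 1)) ≤ ε ^ (1 / (p - 1)) * u r ^ (-c) := by
      rw [mul_assoc] at h1
      exact h1.trans (by gcongr)
    calc _ ≤ ε ^ (1 / (p - 1)) * u r ^ (-c) * u r ^ c := by gcongr
      _ = _ := by rw [mul_assoc, ← rpow_add hu]; simp
  have h5 := rpow_le_rpow (by positivity) h3 hp'.le
  rw [mul_rpow (by positivity) (by positivity), ← rpow_mul hΘ.le, ← rpow_mul hu.le,
    ← rpow_mul hε.le, div_mul_cancel₀ _ hp'.ne', div_mul_cancel₀ _ hp'.ne',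
    div_mul_cancel₀ _ hp'.ne', rpow_one] at h5
  exact h5

theorem hasDerivAt_log_V (h : IsFluxSystem p q A V m u w) {r : ℝ} (hr : 0 < r) :
    HasDerivAt (fun s => log (V s)) (A r / V r) r :=
  (h.hasDerivAt_V r hr).log (h.V_pos r hr).ne'

theorem eventually_ratio_le (h : IsFluxSystem p q A V m u w) (hp : 1 < p)
    (hqp : p < q + 1) {H : ℝ → ℝ} (hVlim : Tendsto V atTop atTop)
    (hH : ∀ᶠ r in atTop, HasDerivAt H ((V r / A r) ^ (1 / (p - 1))) r)
    (hHlim : Tendsto H atTop atTop)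
    (ha : ∀ ε > 0, ∀ᶠ r in atTop, 1 - ε ≤ m r * V r / A r)
    (hX : ∀ r, 0 < r → V r * w r / (A r * u r) ≤ p / ((p - 1) * (q + 1)))
    (hR : ∀ r, 0 < r → V r * u r ^ q ≤ A r * w r ^ (p - 1)) {η : ℝ} (hη : 0 < η) :
    ∀ᶠ r in atTop, V r * w r / (A r * u r) ≤ η := by
  have hp' : 0 < p - 1 := by linarith
  have hq1 : 0 < q + 1 := by linarith
  obtain ⟨κ, hκ, hκeq⟩ : ∃ κ > 0, p / ((p - 1) * (q + 1)) = 1 / (p - 1) - 3 * κ := by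
    refine ⟨(1 / (p - 1) - p / ((p - 1) * (q + 1))) / 3, ?_, by ring⟩
    have : 1 / (p - 1) - p / ((p - 1) * (q + 1)) = (q + 1 - p) / ((p - 1) * (q + 1)) := by
      field_simp
    rw [this]
    exact div_pos (div_pos (by linarith) (by positivity)) (by norm_num)
  refine eventually_le_of_deriv_le_neg (g := fun s => log (V s)) (g' := fun r => A r / V r)
    (κ := κ * η) ((eventually_gt_atTop 0).mono fun r hr => h.hasDerivAt_ratio hp hr)
    ((eventually_gt_atTop 0).mono fun r hr => h.hasDerivAt_log_V hr)
    ((eventually_gt_atTop 0).mono fun r hr => div_pos (h.A_pos r hr) (h.V_pos r hr))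
    (tendsto_log_atTop.comp hVlim) (by positivity) ?_
  filter_upwards [eventually_gt_atTop 0, ha (κ * ((p - 1) / p)) (by positivity),
    h.eventually_theta_mul_le hp hqp hH hHlim ha hR
      (ε := κ * (p - 1) * η ^ (p - 1)) (by positivity)] with r hr h1 h2 h3
  have hA := h.A_pos r hr
  have hw := h.w_pos r hr
  have hV := h.V_pos r hr
  have hu := h.u_pos r hr
  have hwp : 0 < w r ^ (p - 1) := rpow_pos_of_pos hw _
  have hX' := hX r hr
  have hflux : V r * u r ^ q / (A r * w r ^ (p - 1)) ≤ κ * (p - 1) := by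
    have e1 : V r * u r ^ q / (A r * w r ^ (p - 1)) * (V r * w r / (A r * u r)) ^ (p - 1) =
        (V r / A r) ^ p * u r ^ (q + 1 - p) := by
      rw [show V r * w r / (A r * u r) = V r / A r * (w r / u r) by field_simp,
        mul_rpow (by positivity) (by positivity), div_rpow hw.le hu.le,
        show q + 1 - p = q - (p - 1) by ring, rpow_sub hu q (p - 1),
        show (V r / A r) ^ p = (V r / A r) ^ (p - 1) * (V r / A r) by
          rw [← rpow_add_one (by positivity)]; ring_nf]
      have hup : 0 < u r ^ (p - 1) := rpow_pos_of_pos hu _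
      generalize u r ^ (p - 1) = y at hup
      generalize w r ^ (p - 1) = z at hwp
      generalize (V r / A r) ^ (p - 1) = x
      field_simp
    have hηp : 0 < η ^ (p - 1) := rpow_pos_of_pos hη _
    have e2 : V r * u r ^ q / (A r * w r ^ (p - 1)) * η ^ (p - 1) ≤
        κ * (p - 1) * η ^ (p - 1) := by
      refine le_trans ?_ (e1.le.trans h2)
      gcongr
    exact le_of_mul_le_mul_right e2 hηp
  set X := V r * w r / (A r * u r)
  set a := m r * V r / A r
  have hb : 1 - a + 1 / (p - 1) * (V r * u r ^ q / (A r * w r ^ (p - 1)) - a) + X ≤ -κ := by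
    have e1 : 1 / (p - 1) * (V r * u r ^ q / (A r * w r ^ (p - 1))) ≤ κ := by
      calc _ ≤ 1 / (p - 1) * (κ * (p - 1)) := by gcongr
        _ = κ := by field_simp
    have e2 : (1 - a) * (p / (p - 1)) ≤ κ := by
      calc _ ≤ κ * ((p - 1) / p) * (p / (p - 1)) := by gcongr; linarith
        _ = κ := by field_simp
    have e3 : 1 - a + 1 / (p - 1) * (V r * u r ^ q / (A r * w r ^ (p - 1)) - a) + X =
        (1 - a) * (p / (p - 1)) + 1 / (p - 1) * (V r * u r ^ q / (A r * w r ^ (p - 1))) +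
          (X - 1 / (p - 1)) := by
      generalize V r * u r ^ q / (A r * w r ^ (p - 1)) = z
      field_simp
      ring
    rw [e3]
    linarith
  have hAV : 0 < A r / V r := by positivity
  have hXpos : 0 ≤ X := hη.le.trans h3
  calc _ ≤ A r / V r * X * (-κ) := by gcongr
    _ = -(A r / V r * κ * X) := by ring
    _ ≤ -(A r / V r * κ * η) := by gcongr
    _ = _ := by ring

theorem eventually_fluxRatio_le (h : IsFluxSystem p q A V m u w) (hq : 0 < q)
    (hVlim : Tendsto V atTop atTop)
    (hX : ∀ ε > 0, ∀ᶠ r in atTop, V r * w r / (A r * u r) ≤ ε) {η : ℝ} (hη : 0 < η) :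
    ∀ᶠ r in atTop, A r * w r ^ (p - 1) / (V r * u r ^ q) ≤ 1 + η := by
  refine eventually_le_of_deriv_le_neg (g := fun s => log (V s)) (g' := fun r => A r / V r)
    (κ := η / 2) ((eventually_gt_atTop 0).mono fun r hr => h.hasDerivAt_fluxRatio hr)
    ((eventually_gt_atTop 0).mono fun r hr => h.hasDerivAt_log_V hr)
    ((eventually_gt_atTop 0).mono fun r hr => div_pos (h.A_pos r hr) (h.V_pos r hr))
    (tendsto_log_atTop.comp hVlim) (by positivity) ?_
  filter_upwards [eventually_gt_atTop 0, hX (η / (2 * (1 + η)) / q) (by positivity)] with r hr h1 h2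
  set R := A r * w r ^ (p - 1) / (V r * u r ^ q)
  set X := V r * w r / (A r * u r)
  have hR0 : 0 < R := by linarith
  have hqX : q * X ≤ η / (2 * (1 + η)) := by
    rw [le_div_iff₀ hq] at h1
    linarith
  have hAV : 0 < A r / V r := div_pos (h.A_pos r hr) (h.V_pos r hr)
  have key : R * (R⁻¹ - 1 + q * X) ≤ -(η / 2) := by
    calc R * (R⁻¹ - 1 + q * X) ≤ R * (R⁻¹ - 1 + η / (2 * (1 + η))) := by gcongr
      _ = 1 - R * ((2 + η) / (2 * (1 + η))) := by field_simp; ring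
      _ ≤ 1 - (1 + η) * ((2 + η) / (2 * (1 + η))) := by gcongr
      _ = _ := by field_simp; ring
  calc _ = A r / V r * (R * (R⁻¹ - 1 + q * X)) := by ring
    _ ≤ A r / V r * (-(η / 2)) := by gcongr
    _ = _ := by ring

theorem tendsto_fluxRatio (h : IsFluxSystem p q A V m u w) (hp : 1 < p)
    (hqp : p < q + 1) {H : ℝ → ℝ} (hVlim : Tendsto V atTop atTop)
    (hH : ∀ᶠ r in atTop, HasDerivAt H ((V r / A r) ^ (1 / (p - 1))) r)
    (hHlim : Tendsto H atTop atTop)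
    (ha : ∀ ε > 0, ∀ᶠ r in atTop, 1 - ε ≤ m r * V r / A r)
    (hX : ∀ r, 0 < r → V r * w r / (A r * u r) ≤ p / ((p - 1) * (q + 1)))
    (hR : ∀ r, 0 < r → V r * u r ^ q ≤ A r * w r ^ (p - 1)) :
    Tendsto (fun r => A r * w r ^ (p - 1) / (V r * u r ^ q)) atTop (𝓝 1) := by
  rw [tendsto_order]
  constructor
  · intro a ha'
    filter_upwards [eventually_gt_atTop 0] with r hr
    exact ha'.trans_le (h.one_le_fluxRatio hR hr)
  · intro b hb
    filter_upwards [h.eventually_fluxRatio_le (by linarith) hVlim (fun ε hε =>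
      h.eventually_ratio_le hp hqp hVlim hH hHlim ha hX hR hε)
      (η := (b - 1) / 2) (by linarith)] with r hr
    linarith

theorem tendsto_rpow_mul (h : IsFluxSystem p q A V m u w) (hp : 1 < p)
    (hqp : p < q + 1) {H : ℝ → ℝ} (hVlim : Tendsto V atTop atTop)
    (hH : ∀ᶠ r in atTop, HasDerivAt H ((V r / A r) ^ (1 / (p - 1))) r)
    (hHlim : Tendsto H atTop atTop)
    (ha : ∀ ε > 0, ∀ᶠ r in atTop, 1 - ε ≤ m r * V r / A r)
    (hX : ∀ r, 0 < r → V r * w r / (A r * u r) ≤ p / ((p - 1) * (q + 1)))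
    (hR : ∀ r, 0 < r → V r * u r ^ q ≤ A r * w r ^ (p - 1)) :
    Tendsto (fun r => H r ^ ((p - 1) / (q + 1 - p)) * u r) atTop
      (𝓝 (((p - 1) / (q + 1 - p)) ^ ((p - 1) / (q + 1 - p)))) := by
  have hp' : 0 < p - 1 := by linarith
  have hqp' : 0 < q + 1 - p := by linarith
  have hc : 0 < (q + 1 - p) / (p - 1) := div_pos hqp' hp'
  set c := (q + 1 - p) / (p - 1) with hcdef
  have hcinv : (p - 1) / (q + 1 - p) = c⁻¹ := (inv_div _ _).symm
  have hHpos := hHlim.eventually_gt_atTop 0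
  have hratio : Tendsto (fun r => u r ^ (-c) / H r) atTop (𝓝 c) := by
    rw [tendsto_order]
    constructor
    · intro c' hc'
      filter_upwards [hHpos, h.eventually_mul_le_rpow_neg hp hqp hH hHlim hR
        (c' := (c' + c) / 2) (by linarith)] with r hr h1
      rw [lt_div_iff₀ hr]
      refine lt_of_lt_of_le ?_ h1
      gcongr
      linarith
    · intro c' hc'
      have hlim : Tendsto (fun r => c * (A r * w r ^ (p - 1) / (V r * u r ^ q)) ^ (1 / (p - 1)))
          atTop (𝓝 c) := by
        simpa using ((h.tendsto_fluxRatio hp hqp hVlim hH hHlim ha hX hR).rpow_const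
          (p := 1 / (p - 1)) (Or.inl one_ne_zero)).const_mul c
      have h1 := eventually_le_mul_of_deriv_le (κ := (2 * c + c') / 3) (κ' := (c + 2 * c') / 3)
        ((eventually_gt_atTop 0).mono fun r hr => h.hasDerivAt_rpow_neg c hr) hH ?_ hHlim
        (by linarith)
      · filter_upwards [hHpos, h1] with r hr h1
        rw [div_lt_iff₀ hr]
        refine lt_of_le_of_lt h1 ?_
        gcongr
        linarith
      · filter_upwards [eventually_gt_atTop 0,
          hlim.eventually_lt_const (show c < (2 * c + c') / 3 by linarith)] with r hr h2
        have hΘ : 0 < V r / A r := div_pos (h.V_pos r hr) (h.A_pos r hr)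
        rw [h.mul_rpow_eq hp hr, ← mul_assoc]
        gcongr
  rw [hcinv]
  have hfin := (hratio.inv₀ hc.ne').rpow_const (p := c⁻¹) (Or.inl (inv_pos.2 hc).ne')
  refine hfin.congr' ?_
  filter_upwards [eventually_gt_atTop 0, hHpos] with r hr hHr
  have hu := h.u_pos r hr
  rw [inv_div, rpow_neg hu.le, div_inv_eq_mul, mul_rpow hHr.le (by positivity), ← rpow_mul hu.le,
    mul_inv_cancel₀ hc.ne', rpow_one]

theorem eventually_one_sub_le (h : IsFluxSystem p q A V m u w) {ξ ξ' : ℝ → ℝ}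
    (hVlim : Tendsto V atTop atTop) (hm : ∀ r, 0 < r → 0 ≤ m r)
    (hξ : ∀ᶠ r in atTop, HasDerivAt ξ (ξ' r) r) (hξ' : Tendsto ξ' atTop (𝓝 0))
    (hmξ : Tendsto (fun r => m r * ξ r) atTop (𝓝 1)) {ε : ℝ} (hε : 0 < ε) :
    ∀ᶠ r in atTop, 1 - ε ≤ m r * V r / A r := by
  have hsum : Tendsto (fun r => m r * ξ r + ξ' r) atTop (𝓝 1) := by simpa using hmξ.add hξ'
  have h1 := eventually_le_mul_of_deriv_le (f := fun s => A s * ξ s)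
    (f' := fun r => m r * A r * ξ r + A r * ξ' r) (κ := 1 + ε / 3) (κ' := 1 + 2 * (ε / 3))
    (by filter_upwards [eventually_gt_atTop 0, hξ] with r hr hξr
        exact (h.hasDerivAt_A r hr).mul hξr)
    ((eventually_gt_atTop 0).mono fun r hr => h.hasDerivAt_V r hr)
    (by filter_upwards [eventually_gt_atTop 0,
          hsum.eventually_lt_const (show 1 < 1 + ε / 3 by linarith)] with r hr h2
        have := h.A_pos r hr
        nlinarith) hVlim (by linarith)
  filter_upwards [eventually_gt_atTop 0, h1,
    hmξ.eventually_const_lt (show 1 - ε / 3 < 1 by linarith)] with r hr h2 h3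
  have hA := h.A_pos r hr
  have h4 : m r * ξ r ≤ (1 + 2 * (ε / 3)) * (m r * V r / A r) := by
    rw [← mul_div_assoc, le_div_iff₀ hA]
    nlinarith [mul_le_mul_of_nonneg_left h2 (hm r hr)]
  by_contra! h5
  have h6 : (1 + 2 * (ε / 3)) * (m r * V r / A r) ≤ (1 + 2 * (ε / 3)) * (1 - ε) := by gcongr
  nlinarith

end IsFluxSystem

namespace IsCHModel

variable {ψ : ℝ → ℝ} {n : ℕ}

theorem hasDerivAt (hψ : IsCHModel ψ) (r : ℝ) : HasDerivAt ψ (deriv ψ r) r :=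
  ((hψ.1.differentiable (by simp)) r).hasDerivAt

theorem continuous (hψ : IsCHModel ψ) : Continuous ψ := hψ.1.continuous

theorem hasDerivAt_deriv (hψ : IsCHModel ψ) (r : ℝ) :
    HasDerivAt (deriv ψ) (deriv (deriv ψ) r) r :=
  (((contDiff_infty_iff_deriv.1 hψ.1).2.differentiable (by simp)) r).hasDerivAt

theorem one_le_deriv (hψ : IsCHModel ψ) {r : ℝ} (hr : 0 ≤ r) : 1 ≤ deriv ψ r := by
  have := nonneg_of_deriv_nonneg (f := fun s => deriv ψ s - 1) (f' := deriv (deriv ψ))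
    (fun s _ => ((hψ.hasDerivAt_deriv s).sub_const 1).continuousAt.continuousWithinAt)
    (by simp [hψ.2.2.1]) (fun s _ => (hψ.hasDerivAt_deriv s).sub_const 1)
    (fun s hs => hψ.2.2.2.1 s hs.le) hr
  linarith

theorem pos (hψ : IsCHModel ψ) {r : ℝ} (hr : 0 < r) : 0 < ψ r := hψ.2.2.2.2 r hr

theorem self_le (hψ : IsCHModel ψ) {r : ℝ} (hr : 0 ≤ r) : r ≤ ψ r := by
  have := nonneg_of_deriv_nonneg (f := fun s => ψ s - s) (f' := fun s => deriv ψ s - 1)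
    (hψ.continuous.sub continuous_id).continuousOn
    (by simp [hψ.2.1]) (fun s _ => (hψ.hasDerivAt s).sub (hasDerivAt_id s))
    (fun s hs => by linarith [hψ.one_le_deriv hs.le]) hr
  linarith

theorem hasDerivAt_volume (hψ : IsCHModel ψ) (n : ℕ) (r : ℝ) :
    HasDerivAt (fun r => ∫ s in (0:ℝ)..r, ψ s ^ (n - 1)) (ψ r ^ (n - 1)) r :=
  (hψ.continuous.pow (n - 1)).integral_hasStrictDerivAt 0 r |>.hasDerivAt

theorem pow_div_le_volume (hψ : IsCHModel ψ) (hn : 2 ≤ n) {r : ℝ} (hr : 0 ≤ r) :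
    r ^ n / n ≤ ∫ s in (0:ℝ)..r, ψ s ^ (n - 1) := by
  have hn0 : (n : ℝ) ≠ 0 := by positivity
  have hd : ∀ s, HasDerivAt (fun r => (∫ s in (0:ℝ)..r, ψ s ^ (n - 1)) - r ^ n / n)
      (ψ s ^ (n - 1) - s ^ (n - 1)) s := fun s =>
    ((hψ.hasDerivAt_volume n s).sub ((hasDerivAt_pow n s).div_const (n : ℝ))).congr_deriv
      (by field_simp)
  have := nonneg_of_deriv_nonneg (fun s _ => (hd s).continuousAt.continuousWithinAt)
    (by simp; omega) (fun s _ => hd s)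
    (fun s hs => sub_nonneg.2 (pow_le_pow_left₀ hs.le (hψ.self_le hs.le) _)) hr
  linarith

theorem volume_pos (hψ : IsCHModel ψ) (hn : 2 ≤ n) {r : ℝ} (hr : 0 < r) :
    0 < ∫ s in (0:ℝ)..r, ψ s ^ (n - 1) :=
  lt_of_lt_of_le (by positivity) (hψ.pow_div_le_volume hn hr.le)

theorem tendsto_volume (hψ : IsCHModel ψ) (hn : 2 ≤ n) :
    Tendsto (fun r => ∫ s in (0:ℝ)..r, ψ s ^ (n - 1)) atTop atTop := by
  refine tendsto_atTop_mono' _ ((eventually_ge_atTop 0).mono fun r hr =>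
    hψ.pow_div_le_volume hn hr) ?_
  exact (tendsto_pow_atTop (by omega)).atTop_div_const (by positivity)

theorem hasDerivAt_area (hψ : IsCHModel ψ) (hn : 2 ≤ n) {r : ℝ} (hr : 0 < r) :
    HasDerivAt (fun s => ψ s ^ (n - 1))
      (((n : ℝ) - 1) * (deriv ψ r / ψ r) * ψ r ^ (n - 1)) r := by
  have hpos := hψ.pos hr
  refine ((hψ.hasDerivAt r).pow (n - 1)).congr_deriv ?_
  obtain ⟨k, rfl⟩ := Nat.exists_eq_add_of_le' hn
  have : k + 2 - 1 = k + 1 := by omega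
  simp only [this, Nat.add_sub_cancel]
  push_cast
  field_simp
  ring

theorem logDeriv_nonneg (hψ : IsCHModel ψ) (hn : 2 ≤ n) {r : ℝ} (hr : 0 < r) :
    0 ≤ ((n : ℝ) - 1) * (deriv ψ r / ψ r) := by
  have h1 := hψ.one_le_deriv hr.le
  have h2 := hψ.pos hr
  have h3 : (2 : ℝ) ≤ n := by exact_mod_cast hn
  exact mul_nonneg (by linarith) (div_nonneg (by linarith) h2.le)

theorem volume_le (hψ : IsCHModel ψ) (hn : 2 ≤ n) {r : ℝ} (hr : 0 ≤ r) :
    ∫ s in (0:ℝ)..r, ψ s ^ (n - 1) ≤ r * ψ r ^ (n - 1) := by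
  have hc : Continuous fun r => ∫ s in (0:ℝ)..r, ψ s ^ (n - 1) :=
    continuous_iff_continuousAt.2 fun s => (hψ.hasDerivAt_volume n s).continuousAt
  have := nonneg_of_deriv_nonneg
    (f := fun r => r * ψ r ^ (n - 1) - ∫ s in (0:ℝ)..r, ψ s ^ (n - 1))
    ((continuous_id.mul (hψ.continuous.pow _)).sub hc).continuousOn (by simp)
    (fun s hs => ((hasDerivAt_id s).mul (hψ.hasDerivAt_area hn hs)).sub (hψ.hasDerivAt_volume n s))
    (fun s hs => by
      have h1 := mul_nonneg hs.le (mul_nonneg (hψ.logDeriv_nonneg hn hs)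
        (pow_nonneg (hψ.pos hs).le (n - 1)))
      simp only [id]
      linarith) hr
  linarith

theorem pow_le_deriv_mul_volume (hψ : IsCHModel ψ) (hn : 2 ≤ n) {r : ℝ} (hr : 0 ≤ r) :
    ψ r ^ n ≤ n * deriv ψ r * ∫ s in (0:ℝ)..r, ψ s ^ (n - 1) := by
  have hd : ∀ s, 0 ≤ s → HasDerivAt
      (fun r => n * (∫ s in (0:ℝ)..r, ψ s ^ (n - 1)) - ψ r ^ n / deriv ψ r)
      (ψ s ^ n * deriv (deriv ψ) s / deriv ψ s ^ 2) s := by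
    intro s hs
    have h1 : 0 < deriv ψ s := by linarith [hψ.one_le_deriv hs]
    refine (((hψ.hasDerivAt_volume n s).const_mul (n : ℝ)).sub
      (((hψ.hasDerivAt s).pow n).div (hψ.hasDerivAt_deriv s) h1.ne')).congr_deriv ?_
    simp only [Pi.pow_apply]
    field_simp
    ring
  have h2 := nonneg_of_deriv_nonneg
    (fun s hs => (hd s hs).continuousAt.continuousWithinAt)
    (by simp [hψ.2.1, show n ≠ 0 by omega]) (fun s hs => hd s hs.le)
    (fun s hs => div_nonneg (mul_nonneg (pow_nonneg (hψ.pos hs).le _) (hψ.2.2.2.1 s hs.le))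
      (sq_nonneg _)) hr
  have h3 : 0 < deriv ψ r := by linarith [hψ.one_le_deriv hr]
  rw [sub_nonneg, div_le_iff₀ h3] at h2
  linarith

theorem area_le (hψ : IsCHModel ψ) (hn : 2 ≤ n) {r : ℝ} (hr : 0 < r) :
    ((n : ℝ) - 1) / n * ψ r ^ (n - 1) ≤
      ((n : ℝ) - 1) * (deriv ψ r / ψ r) * ∫ s in (0:ℝ)..r, ψ s ^ (n - 1) := by
  have h1 := hψ.pow_le_deriv_mul_volume hn hr.le
  have h2 := hψ.pos hr
  have h3 : (2 : ℝ) ≤ n := by exact_mod_cast hn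
  have h4 : ψ r ^ (n - 1) = ψ r ^ n / ψ r := by
    rw [eq_div_iff h2.ne', ← pow_succ, Nat.sub_add_cancel (by omega)]
  rw [h4]
  calc ((n : ℝ) - 1) / n * (ψ r ^ n / ψ r) = ((n : ℝ) - 1) / n / ψ r * ψ r ^ n := by field_simp
    _ ≤ ((n : ℝ) - 1) / n / ψ r * (n * deriv ψ r * ∫ s in (0:ℝ)..r, ψ s ^ (n - 1)) := by
        gcongr
        exact div_nonneg (div_nonneg (by linarith) (by linarith)) h2.le
    _ = ((n : ℝ) - 1) * (deriv ψ r / ψ r) * ∫ s in (0:ℝ)..r, ψ s ^ (n - 1) := by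
        field_simp

theorem continuousOn_Theta (hψ : IsCHModel ψ) (hn : 2 ≤ n) :
    ContinuousOn (Theta n ψ) (Set.Ici 0) := by
  intro r hr
  rcases (show (0:ℝ) ≤ r from hr).eq_or_lt with rfl | hr
  · have h0 : Theta n ψ 0 = 0 := by simp [Theta]
    rw [ContinuousWithinAt, h0]
    refine tendsto_of_tendsto_of_tendsto_of_le_of_le' (g := fun _ => 0) (h := fun r => r)
      tendsto_const_nhds (tendsto_id.mono_left nhdsWithin_le_nhds) ?_ ?_
    · filter_upwards [self_mem_nhdsWithin] with s hs
      rcases (show (0:ℝ) ≤ s from hs).eq_or_lt with rfl | hs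
      · exact h0.ge
      · exact (div_pos (hψ.volume_pos hn hs) (pow_pos (hψ.pos hs) _)).le
    · filter_upwards [self_mem_nhdsWithin] with s hs
      rcases (show (0:ℝ) ≤ s from hs).eq_or_lt with rfl | hs
      · exact h0.le
      · exact (div_le_iff₀ (pow_pos (hψ.pos hs) _)).2 (hψ.volume_le hn hs.le)
  · exact ((hψ.hasDerivAt_volume n r).continuousAt.div
      (hψ.continuous.pow (n - 1)).continuousAt
      (pow_pos (hψ.pos hr) _).ne').continuousWithinAt

theorem hasDerivAt_integral_Theta_rpow (hψ : IsCHModel ψ) (hn : 2 ≤ n) {β : ℝ} (hβ : 0 ≤ β)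
    {r : ℝ} (hr : 0 < r) :
    HasDerivAt (fun r => ∫ s in (0:ℝ)..r, Theta n ψ s ^ β) (Theta n ψ r ^ β) r := by
  have hc : ContinuousOn (fun s => Theta n ψ s ^ β) (Set.Ici 0) :=
    (hψ.continuousOn_Theta hn).rpow_const fun _ _ => Or.inr hβ
  refine intervalIntegral.integral_hasDerivAt_right
    (hc.mono ?_).intervalIntegrable ?_ (hc.continuousAt (Ici_mem_nhds hr))
  · rw [Set.uIcc_of_le hr.le]
    exact Set.Icc_subset_Ici_self
  · exact (hc.mono Set.Ioi_subset_Ici_self).stronglyMeasurableAtFilter isOpen_Ioi r hr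

end IsCHModel

namespace IsRadialSolution

variable {n : ℕ} {p q α : ℝ} {ψ u : ℝ → ℝ}

theorem continuousOn_deriv (hu : IsRadialSolution n p q ψ ⊤ α u) :
    ContinuousOn (deriv u) (Set.Ici 0) :=
  hu.deriv_cont.mono fun _ hr => ⟨hr, ENNReal.ofReal_lt_top⟩

theorem continuousOn (hu : IsRadialSolution n p q ψ ⊤ α u) : ContinuousOn u (Set.Ici 0) :=
  fun r hr => (hu.diff r hr ENNReal.ofReal_lt_top).continuousAt.continuousWithinAt

theorem deriv_neg (hu : IsRadialSolution n p q ψ ⊤ α u) (hp : 1 < p)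
    (hψ : IsCHModel ψ) {r : ℝ} (hr : 0 < r) : deriv u r < 0 := by
  set Φ : ℝ → ℝ := fun s => ψ s ^ (n - 1) * |deriv u s| ^ (p - 2) * deriv u s with hΦ
  have hd : ∀ s, 0 < s → HasDerivAt Φ (-(ψ s ^ (n - 1) * u s ^ q)) s :=
    fun s hs => hu.eqn s hs ENNReal.ofReal_lt_top
  have h0 : Φ 0 = 0 := by simp [hΦ, hu.deriv_init]
  have hc : ContinuousOn Φ (Set.Ici 0) := by
    intro s hs
    rcases (show (0:ℝ) ≤ s from hs).eq_or_lt with rfl | hs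
    · rw [ContinuousWithinAt, h0]
      have hb : ContinuousOn (fun s => |ψ s| ^ (n - 1) * |deriv u s| ^ (p - 1)) (Set.Ici 0) :=
        (hψ.continuous.abs.pow _).continuousOn.mul
          (hu.continuousOn_deriv.abs.rpow_const fun _ _ => Or.inr (by linarith))
      have hb0 := hb 0 Set.self_mem_Ici
      rw [ContinuousWithinAt, hu.deriv_init, abs_zero, zero_rpow (by linarith), mul_zero] at hb0
      refine squeeze_zero_norm (fun s => le_of_eq ?_) hb0
      simp only [hΦ, norm_mul, norm_eq_abs, abs_pow, mul_assoc]
      congr 1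
      rw [abs_rpow_of_nonneg (abs_nonneg _), abs_abs]
      rcases eq_or_ne (deriv u s) 0 with hz | hz
      · rw [hz, abs_zero, mul_zero, zero_rpow (by linarith)]
      · rw [← rpow_add_one (abs_pos.2 hz).ne']
        ring_nf
    · exact (hd s hs).continuousAt.continuousWithinAt
  have hanti : StrictAntiOn Φ (Set.Ici 0) := by
    refine strictAntiOn_of_deriv_neg (convex_Ici 0) hc fun s hs => ?_
    rw [interior_Ici] at hs
    rw [(hd s hs).deriv, neg_lt_zero]
    exact mul_pos (pow_pos (hψ.pos hs) _)
      (rpow_pos_of_pos (hu.pos s (le_of_lt hs) ENNReal.ofReal_lt_top) _)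
  have hneg : Φ r < 0 := h0 ▸ hanti Set.self_mem_Ici hr.le hr
  by_contra! hcon
  exact absurd hneg (not_lt.2 (mul_nonneg (mul_nonneg (pow_nonneg (hψ.pos hr).le _)
    (rpow_nonneg (abs_nonneg _) _)) hcon))

theorem isFluxSystem (hu : IsRadialSolution n p q ψ ⊤ α u) (hn : 2 ≤ n) (hp : 1 < p)
    (hψ : IsCHModel ψ) :
    IsFluxSystem p q (fun s => ψ s ^ (n - 1)) (fun r => ∫ s in (0:ℝ)..r, ψ s ^ (n - 1))
      (fun r => ((n : ℝ) - 1) * (deriv ψ r / ψ r)) u (fun r => -deriv u r) where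
  A_pos r hr := pow_pos (hψ.pos hr) _
  V_pos r hr := hψ.volume_pos hn hr
  u_pos r hr := hu.pos r hr.le ENNReal.ofReal_lt_top
  w_pos r hr := neg_pos.2 (hu.deriv_neg hp hψ hr)
  hasDerivAt_V r _ := hψ.hasDerivAt_volume n r
  hasDerivAt_A r hr := hψ.hasDerivAt_area hn hr
  hasDerivAt_u r hr := by
    simpa using (hu.diff r hr.le ENNReal.ofReal_lt_top).hasDerivAt
  hasDerivAt_flux r hr := by
    have h1 := (hu.eqn r hr ENNReal.ofReal_lt_top).neg
    rw [neg_neg] at h1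
    refine h1.congr_of_eventuallyEq ?_
    filter_upwards [eventually_gt_nhds hr] with s hs
    have h2 := hu.deriv_neg hp hψ hs
    simp only [Pi.neg_apply]
    rw [abs_of_neg h2, show p - 1 = p - 2 + 1 by ring, rpow_add_one (neg_pos.2 h2).ne']
    ring

theorem volume_mul_rpow_le (hu : IsRadialSolution n p q ψ ⊤ α u) (hn : 2 ≤ n) (hp : 1 < p)
    (hq : 0 < q) (hψ : IsCHModel ψ) {r : ℝ} (hr : 0 < r) :
    (∫ s in (0:ℝ)..r, ψ s ^ (n - 1)) * u r ^ q ≤ ψ r ^ (n - 1) * (-deriv u r) ^ (p - 1) := by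
  have h := hu.isFluxSystem hn hp hψ
  have hVc : Continuous fun r => ∫ s in (0:ℝ)..r, ψ s ^ (n - 1) :=
    continuous_iff_continuousAt.2 fun s => (hψ.hasDerivAt_volume n s).continuousAt
  have := nonneg_of_deriv_nonneg (f := fun r => ψ r ^ (n - 1) * (-deriv u r) ^ (p - 1) -
      (∫ s in (0:ℝ)..r, ψ s ^ (n - 1)) * u r ^ q)
    (((hψ.continuous.pow _).continuousOn.mul
      (hu.continuousOn_deriv.neg.rpow_const fun _ _ => Or.inr (by linarith))).sub
      (hVc.continuousOn.mul (hu.continuousOn.rpow_const fun _ _ => Or.inr hq.le)))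
    (by simp [hψ.2.1, show n - 1 ≠ 0 by omega])
    (fun s hs => (h.hasDerivAt_flux s hs).sub ((h.hasDerivAt_V s hs).mul
      ((h.hasDerivAt_u s hs).rpow_const (Or.inl (h.u_pos s hs).ne'))))
    (fun s hs => by
      have h1 := mul_pos (h.V_pos s hs) (mul_pos (mul_pos (h.w_pos s hs) hq)
        (rpow_pos_of_pos (h.u_pos s hs) (q - 1)))
      linarith) hr.le
  linarith

theorem volume_mul_deriv_le (hu : IsRadialSolution n p q ψ ⊤ α u) (hn : 2 ≤ n) (hp : 1 < p)
    (hq : 0 < q) (hpq : (p - 1) / p + 1 / (q + 1) ≤ ((n : ℝ) - 1) / n)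
    (hψ : IsCHModel ψ) {r : ℝ} (hr : 0 < r) :
    (∫ s in (0:ℝ)..r, ψ s ^ (n - 1)) * (-deriv u r) / (ψ r ^ (n - 1) * u r) ≤
      p / ((p - 1) * (q + 1)) := by
  have h := hu.isFluxSystem hn hp hψ
  have hVc : Continuous fun r => ∫ s in (0:ℝ)..r, ψ s ^ (n - 1) :=
    continuous_iff_continuousAt.2 fun s => (hψ.hasDerivAt_volume n s).continuousAt
  have hP := nonneg_of_deriv_nonneg
    (f := fun s => ψ s ^ (n - 1) * (-deriv u s) ^ (p - 1) * u s / (q + 1) -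
      (∫ t in (0:ℝ)..s, ψ t ^ (n - 1)) *
        ((p - 1) / p * (-deriv u s) ^ p + u s ^ (q + 1) / (q + 1)))
    (((((hψ.continuous.pow _).continuousOn.mul
      (hu.continuousOn_deriv.neg.rpow_const fun _ _ => Or.inr (by linarith))).mul
        hu.continuousOn).div_const _).sub
      (hVc.continuousOn.mul (((hu.continuousOn_deriv.neg.rpow_const
        fun _ _ => Or.inr (by linarith)).const_mul _).add
        ((hu.continuousOn.rpow_const fun _ _ => Or.inr (by linarith)).div_const _))))
    (by simp [hψ.2.1, show n - 1 ≠ 0 by omega])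
    (fun s hs => h.hasDerivAt_pohozaev hp hq hs)
    (fun s hs => by
      refine mul_nonneg (rpow_pos_of_pos (h.w_pos s hs) _).le (sub_nonneg.2 ?_)
      refine le_trans ?_ (hψ.area_le hn hs)
      exact mul_le_mul_of_nonneg_right hpq (h.A_pos s hs).le) hr.le
  have hA := h.A_pos r hr
  have hw := h.w_pos r hr
  have hV := h.V_pos r hr
  have hur := h.u_pos r hr
  have hwp : 0 < (-deriv u r) ^ (p - 1) := rpow_pos_of_pos hw _
  have huq : 0 < u r ^ (q + 1) := rpow_pos_of_pos hur _
  have hp' : 0 < p - 1 := by linarith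
  have e1 : (-deriv u r) ^ p = (-deriv u r) ^ (p - 1) * -deriv u r := by
    rw [← rpow_add_one hw.ne']; ring_nf
  rw [sub_nonneg, e1] at hP
  set w := -deriv u r
  set V := ∫ s in (0:ℝ)..r, ψ s ^ (n - 1)
  set a := ψ r ^ (n - 1)
  generalize w ^ (p - 1) = z at *
  have h1 : z * (V * w * ((p - 1) * (q + 1))) ≤ z * (p * (a * u r)) := by
    have h2 : V * ((p - 1) / p * (z * w)) ≤ a * z * u r / (q + 1) := by
      refine le_trans ?_ hP
      gcongr
      exact le_add_of_nonneg_right (by positivity)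
    rw [le_div_iff₀ (by linarith)] at h2
    have h3 := mul_le_mul_of_nonneg_left h2 (show 0 ≤ p by linarith)
    have h4 : p * (V * ((p - 1) / p * (z * w)) * (q + 1)) =
        z * (V * w * ((p - 1) * (q + 1))) := by field_simp
    linarith
  rw [div_le_div_iff₀ (mul_pos hA hur) (by positivity)]
  exact le_of_mul_le_mul_left h1 hwp

end IsRadialSolution

/-- Under either growth condition, `ψ' / ψ` is asymptotically the inverse of a function with
vanishing derivative at infinity. -/
theorem exists_tendsto_logDeriv_mul {ψ : ℝ → ℝ} (hψ : IsCHModel ψ) (hcond : CondA ψ ∨ CondB ψ) :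
    ∃ ξ ξ' : ℝ → ℝ, (∀ᶠ r in atTop, HasDerivAt ξ (ξ' r) r) ∧ Tendsto ξ' atTop (𝓝 0) ∧
      Tendsto (fun r => deriv ψ r / ψ r * ξ r) atTop (𝓝 1) := by
  rcases hcond with ⟨γ, ℓ, -, hγ, hℓ, hlim⟩ | ⟨-, hlim⟩
  · refine ⟨fun r => r ^ γ / ℓ, fun r => γ * r ^ (γ - 1) / ℓ, ?_, ?_, ?_⟩
    · filter_upwards [eventually_gt_atTop 0] with r hr
      exact (hasDerivAt_rpow_const (Or.inl hr.ne')).div_const ℓ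
    · have h1 : Tendsto (fun r : ℝ => r ^ (γ - 1)) atTop (𝓝 0) := by
        simpa using tendsto_rpow_neg_atTop (show 0 < 1 - γ by linarith)
      simpa using (h1.const_mul γ).div_const ℓ
    · have h1 := hlim.div_const ℓ
      rw [div_self hℓ.ne'] at h1
      exact h1.congr fun r => by ring
  · refine ⟨fun r => (deriv ψ r / ψ r)⁻¹, fun r => -(ψ r / deriv ψ r *
      deriv (fun s : ℝ => Real.log (deriv ψ s / ψ s)) r), ?_, by simpa using hlim.neg, ?_⟩
    · filter_upwards [eventually_gt_atTop 0] with r hr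
      have h1 : 0 < deriv ψ r := by linarith [hψ.one_le_deriv hr.le]
      have h2 := hψ.pos hr
      have h3 := (hψ.hasDerivAt_deriv r).div (hψ.hasDerivAt r) h2.ne'
      have h4 : (deriv ψ / ψ) r ≠ 0 := (div_pos h1 h2).ne'
      refine (h3.inv h4).congr_deriv ?_
      have h5 : deriv (fun s : ℝ => Real.log (deriv ψ s / ψ s)) r = _ := (h3.log h4).deriv
      rw [h5]
      simp only [Pi.div_apply]
      field_simp
    · refine tendsto_const_nhds.congr' ?_
      filter_upwards [eventually_gt_atTop 0] with r hr
      have h1 : 0 < deriv ψ r := by linarith [hψ.one_le_deriv hr.le]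
      exact (mul_inv_cancel₀ (div_pos h1 (hψ.pos hr)).ne').symm

/-- the precise asymptotics
`(∫₀ʳ Θ^{1/(p-1)})^{(p-1)/(q+1-p)} u(r) → ((p-1)/(q+1-p))^{(p-1)/(q+1-p)}`. -/
theorem statement_17 (n : ℕ) (hn : 2 ≤ n) (p q : ℝ) (hp1 : 1 < p) (hpn : p < n)
    (hq : (n : ℝ) * p / ((n : ℝ) - p) - 1 ≤ q)
    (ψ : ℝ → ℝ) (hψ : IsCHModel ψ)
    (hpc : Tendsto (fun r : ℝ => ∫ s in (0:ℝ)..r, Theta n ψ s ^ (1 / (p - 1)))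
      atTop atTop)
    (hcond : CondA ψ ∨ CondB ψ)
    (α : ℝ) (hα : 0 < α)
    (u : ℝ → ℝ) (hu : IsRadialSolution n p q ψ ⊤ α u) :
    Tendsto (fun r : ℝ =>
        (∫ s in (0:ℝ)..r, Theta n ψ s ^ (1 / (p - 1))) ^ ((p - 1) / (q + 1 - p)) *
          u r) atTop
      (nhds (((p - 1) / (q + 1 - p)) ^ ((p - 1) / (q + 1 - p)))) := by
  have hn0 : (0 : ℝ) < n := by positivity
  have hn1 : (n : ℝ) - 1 ≠ 0 := by linarith
  have hnp : 0 < (n : ℝ) - p := by linarith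
  have hpos : 0 < (n : ℝ) * p / ((n : ℝ) - p) := by positivity
  have hqinv : 1 / (q + 1) ≤ ((n : ℝ) - p) / (n * p) := by
    rw [← one_div_div ((n : ℝ) * p)]
    exact one_div_le_one_div_of_le hpos (by linarith)
  have hqp : p < q + 1 := by
    have h1 : p < (n : ℝ) * p / ((n : ℝ) - p) := by
      rw [lt_div_iff₀ hnp]
      nlinarith
    linarith
  have hpq : (p - 1) / p + 1 / (q + 1) ≤ ((n : ℝ) - 1) / n := by
    have h1 : (p - 1) / p + ((n : ℝ) - p) / (n * p) = ((n : ℝ) - 1) / n := by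
      field_simp
      ring
    linarith
  have hq0 : 0 < q := by linarith
  have h := hu.isFluxSystem hn hp1 hψ
  obtain ⟨ξ, ξ', hξ, hξ', hmξ⟩ := exists_tendsto_logDeriv_mul hψ hcond
  refine h.tendsto_rpow_mul hp1 hqp (hψ.tendsto_volume hn) ?_ hpc ?_ ?_ ?_
  · filter_upwards [eventually_gt_atTop 0] with r hr
    exact hψ.hasDerivAt_integral_Theta_rpow hn (one_div_nonneg.2 (by linarith)) hr
  · intro ε hε
    refine h.eventually_one_sub_le (ξ := fun r => ξ r / ((n : ℝ) - 1))
      (ξ' := fun r => ξ' r / ((n : ℝ) - 1)) (hψ.tendsto_volume hn)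
      (fun r hr => hψ.logDeriv_nonneg hn hr) (hξ.mono fun r hr => hr.div_const _)
      (by simpa using hξ'.div_const ((n : ℝ) - 1)) (hmξ.congr fun r => ?_) hε
    field_simp
  · exact fun r hr => hu.volume_mul_deriv_le hn hp1 hq0 hpq hψ hr
  · exact fun r hr => hu.volume_mul_rpow_le hn hp1 hq0 hψ hr
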